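/- Let n be a finite type and let ρ ∈ Matrix n n ℂ be Hermitian. Then (‖ρ‖₁ + Re(Tr ρ))/2 is the greatest element of the set {r : ℝ | ∃ X ∈ Matrix n n ℂ, X is positive semidefinite, 1 - X is positive semidefinite, and r = Re(Tr(ρ · X))}. In particular, when Tr ρ = 1 the optimal value of the dual semidefinite program sup{ Tr[ρX] - 1 : X ≥ 0, X ≤ I } equals (‖ρ‖₁ - 1)/2, so strong duality holds for the robustness of non-Markovianity. -/

import Mathlib

open Matrix
open scoped ComplexOrder

open scoped MatrixOrder in
/-- The trace norm of a matrix: the trace of the positive semidefinite square root of `AᴴA`. -/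
noncomputable def traceNorm {n : Type*} [Fintype n] [DecidableEq n] (A : Matrix n n ℂ) : ℝ :=
  ((CFC.sqrt (Aᴴ * A)).trace).re

/-! With `P` the spectral projection of `ρ` onto `[0, ∞)`, the Jordan decomposition `ρ = ρ⁺ - ρ⁻`
gives `Tr (ρ X) ≤ Tr (ρ⁺ X) ≤ Tr ρ⁺ = Tr (ρ P)` for `0 ≤ X ≤ 1`, because the trace of a product of
two positive semidefinite matrices is nonnegative. Finally `|ρ| + ρ = 2 ρ⁺`. -/

section RCLike

open scoped MatrixOrder

variable {𝕜 n : Type*} [RCLike 𝕜] [Fintype n]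

lemma trace_mul_nonneg {A B : Matrix n n 𝕜} (hA : 0 ≤ A) (hB : 0 ≤ B) : 0 ≤ (A * B).trace := by
  classical
  obtain ⟨C, rfl⟩ := CStarAlgebra.nonneg_iff_eq_star_mul_self.mp hA
  rw [mul_assoc, trace_mul_comm]
  exact (star_right_conjugate_nonneg hB C).posSemidef.trace_nonneg

variable [DecidableEq n]

lemma trace_mul_le_trace_posPart {A X : Matrix n n 𝕜} (hA : A.IsHermitian) (hX : 0 ≤ X)
    (hX_one : X ≤ 1) : (A * X).trace ≤ (A⁺).trace := by
  have hpos : 0 ≤ (A⁺ * (1 - X)).trace :=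
    trace_mul_nonneg (CFC.posPart_nonneg A) (sub_nonneg.mpr hX_one)
  have hneg : 0 ≤ (A⁻ * X).trace := trace_mul_nonneg (CFC.negPart_nonneg A) hX
  calc (A * X).trace
      = (A⁺ * X).trace - (A⁻ * X).trace := by
        rw [← trace_sub, ← sub_mul, CFC.posPart_sub_negPart A hA.isSelfAdjoint]
    _ ≤ (A⁺ * X).trace := sub_le_self _ hneg
    _ ≤ (A⁺).trace := by rwa [mul_sub, mul_one, trace_sub, sub_nonneg] at hpos

/-- The orthogonal projection onto the sum of the eigenspaces of a Hermitian matrix for its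
nonnegative eigenvalues, as the functional calculus of the indicator function of `[0, ∞)`; that
function is continuous on the spectrum because the spectrum is finite. The value is `0` when the
matrix is not Hermitian. -/
noncomputable def nonnegSpectralProjection (A : Matrix n n 𝕜) : Matrix n n 𝕜 :=
  cfc ((Set.Ici (0 : ℝ)).indicator 1) A

lemma nonnegSpectralProjection_nonneg (A : Matrix n n 𝕜) : 0 ≤ nonnegSpectralProjection A :=
  cfc_nonneg fun _ _ => Set.indicator_nonneg (fun _ _ => zero_le_one) _

lemma nonnegSpectralProjection_le_one (A : Matrix n n 𝕜) : nonnegSpectralProjection A ≤ 1 :=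
  cfc_le_one _ _ fun _ _ => Set.indicator_le_self' (fun _ _ => zero_le_one) _

lemma mul_nonnegSpectralProjection {A : Matrix n n 𝕜} (hA : A.IsHermitian) :
    A * nonnegSpectralProjection A = A⁺ := by
  have hcont (f : ℝ → ℝ) : ContinuousOn f (spectrum ℝ A) := A.finite_real_spectrum.continuousOn f
  have hmul (x : ℝ) : x * (Set.Ici (0 : ℝ)).indicator 1 x = x⁺ := by
    by_cases hx : 0 ≤ x
    · simp [hx]
    · simp [hx, (not_le.mp hx).le]
  calc A * nonnegSpectralProjection A
      = cfc (fun x : ℝ => x * (Set.Ici (0 : ℝ)).indicator 1 x) A := by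
        rw [cfc_mul _ _ _ (hcont _) (hcont _), cfc_id' ℝ A hA.isSelfAdjoint,
          nonnegSpectralProjection]
    _ = cfc (fun x : ℝ => x⁺) A := cfc_congr fun x _ => hmul x
    _ = A⁺ := by rw [CFC.posPart_def, cfcₙ_eq_cfc (hf := continuous_posPart.continuousOn)]

theorem isGreatest_trace_mul_Icc {A : Matrix n n 𝕜} (hA : A.IsHermitian) :
    IsGreatest ((fun X => (A * X).trace) '' Set.Icc 0 1) (A⁺).trace := by
  constructor
  · exact ⟨nonnegSpectralProjection A,
      ⟨nonnegSpectralProjection_nonneg A, nonnegSpectralProjection_le_one A⟩,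
      congrArg trace (mul_nonnegSpectralProjection hA)⟩
  · rintro _ ⟨X, ⟨hX, hX_one⟩, rfl⟩
    exact trace_mul_le_trace_posPart hA hX hX_one

theorem dual_sdp_value_general {ρ : Matrix n n 𝕜} (hρ : ρ.IsHermitian) :
    IsGreatest {r : ℝ | ∃ X : Matrix n n 𝕜, X.PosSemidef ∧ (1 - X).PosSemidef ∧
        r = RCLike.re (ρ * X).trace}
      ((RCLike.re (CFC.abs ρ).trace + RCLike.re ρ.trace) / 2) := by
  have hset : {r : ℝ | ∃ X : Matrix n n 𝕜, X.PosSemidef ∧ (1 - X).PosSemidef ∧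
      r = RCLike.re (ρ * X).trace} =
        RCLike.re '' ((fun X => (ρ * X).trace) '' Set.Icc 0 1) := by
    ext r
    simp only [Set.mem_ofPred_eq, Set.image_image, Set.mem_image, Set.mem_Icc,
      ← nonneg_iff_posSemidef, sub_nonneg, and_assoc, eq_comm]
  have hvalue : (RCLike.re (CFC.abs ρ).trace + RCLike.re ρ.trace) / 2 = RCLike.re (ρ⁺).trace := by
    rw [← map_add, ← trace_add, CFC.abs_add_self ρ hρ.isSelfAdjoint, two_nsmul, trace_add, map_add,
      add_self_div_two]
  rw [hset, hvalue]
  exact RCLike.re_monotone.map_isGreatest (isGreatest_trace_mul_Icc hρ)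

end RCLike

open scoped MatrixOrder in
lemma traceNorm_eq_re_trace_abs {n : Type*} [Fintype n] [DecidableEq n] (A : Matrix n n ℂ) :
    traceNorm A = (CFC.abs A).trace.re :=
  rfl

/-- The dual semidefinite program `sup { Re Tr[ρX] : 0 ≤ X ≤ I }` attains the value
`(‖ρ‖₁ + Re Tr ρ)/2`; in particular for `Tr ρ = 1` the dual optimal value of
`sup { Tr[ρX] - 1 }` is `(‖ρ‖₁ - 1)/2`, so strong duality holds. -/
theorem dual_sdp_value {n : Type*} [Fintype n] [DecidableEq n]
    (ρ : Matrix n n ℂ) (hρ : ρ.IsHermitian) :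
    IsGreatest {r : ℝ | ∃ X : Matrix n n ℂ, X.PosSemidef ∧
        ((1 : Matrix n n ℂ) - X).PosSemidef ∧ r = ((ρ * X).trace).re}
      ((traceNorm ρ + (ρ.trace).re) / 2) := by
  rw [traceNorm_eq_re_trace_abs]
  exact dual_sdp_value_general hρ
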